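/- For every n, the number of matchings of [2n] avoiding both 123 and 231 equals the number of matchings of [2n] avoiding both 123 and 312, and likewise the number of set partitions of [n] avoiding both 123 and 231 equals the number avoiding both 123 and 312. Nevertheless, the pairs {123,231} and {123,312} are not shape-Wilf-equivalent: for the Ferrers board F ∈ F_5 having three columns of height 5 followed by two columns of height 4, the number of matchings of shape F avoiding {123,231} is 14, while the number avoiding {123,312} is 15. -/

import Mathlib

/-! ### Patterns of length 3 and 4 as permutations (0-indexed values) -/

def p123 : Equiv.Perm (Fin 3) :=
  ⟨![0,1,2], ![0,1,2], by intro x; fin_cases x <;> rfl, by intro x; fin_cases x <;> rfl⟩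
def p132 : Equiv.Perm (Fin 3) :=
  ⟨![0,2,1], ![0,2,1], by intro x; fin_cases x <;> rfl, by intro x; fin_cases x <;> rfl⟩
def p213 : Equiv.Perm (Fin 3) :=
  ⟨![1,0,2], ![1,0,2], by intro x; fin_cases x <;> rfl, by intro x; fin_cases x <;> rfl⟩
def p231 : Equiv.Perm (Fin 3) :=
  ⟨![1,2,0], ![2,0,1], by intro x; fin_cases x <;> rfl, by intro x; fin_cases x <;> rfl⟩
def p312 : Equiv.Perm (Fin 3) :=
  ⟨![2,0,1], ![1,2,0], by intro x; fin_cases x <;> rfl, by intro x; fin_cases x <;> rfl⟩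
def p321 : Equiv.Perm (Fin 3) :=
  ⟨![2,1,0], ![2,1,0], by intro x; fin_cases x <;> rfl, by intro x; fin_cases x <;> rfl⟩
def p1342 : Equiv.Perm (Fin 4) :=
  ⟨![0,2,3,1], ![0,3,1,2], by intro x; fin_cases x <;> rfl, by intro x; fin_cases x <;> rfl⟩
def p1324 : Equiv.Perm (Fin 4) :=
  ⟨![0,2,1,3], ![0,2,1,3], by intro x; fin_cases x <;> rfl, by intro x; fin_cases x <;> rfl⟩

/-! ### Perfect matchings of `[2n] = {1, …, 2n}` as finsets of pairs `(i,j)`, `i < j` -/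

/-- `M` is a perfect matching of `{1, …, 2n}`. -/
def IsPerfectMatching (n : ℕ) (M : Finset (ℕ × ℕ)) : Prop :=
  (∀ p ∈ M, p.1 < p.2 ∧ 1 ≤ p.1 ∧ p.2 ≤ 2 * n) ∧
  ∀ x, 1 ≤ x → x ≤ 2 * n → ∃! p, p ∈ M ∧ (p.1 = x ∨ p.2 = x)

/-- The matching `M` contains the pattern `τ ∈ S_k`: there are
`i_1 < i_2 < ⋯ < i_{2k}` with `(i_a, i_{2k+1-τ(a)}) ∈ M` for all `1 ≤ a ≤ k`
(written here 0-indexed). -/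
def MatchContains {k : ℕ} (τ : Equiv.Perm (Fin k)) (M : Finset (ℕ × ℕ)) : Prop :=
  ∃ f : Fin (2 * k) → ℕ, StrictMono f ∧
    ∀ a : Fin k,
      (f ⟨a.1, by have := a.isLt; omega⟩,
       f ⟨2 * k - 1 - (τ a).1, by have := (τ a).isLt; omega⟩) ∈ M

def MatchAvoids {k : ℕ} (τ : Equiv.Perm (Fin k)) (M : Finset (ℕ × ℕ)) : Prop :=
  ¬ MatchContains τ M

/-! ### Dyck paths as lists of booleans (`true` = east step, `false` = south step) -/

/-- A Dyck path of semilength `n`, from `(0,n)` to `(n,0)`, staying weakly above `y = n - x`. -/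
def IsDyckPath (n : ℕ) (t : List Bool) : Prop :=
  t.length = 2 * n ∧ t.count true = n ∧
  ∀ i, (t.take i).count false ≤ (t.take i).count true

/-- The height (distance above the diagonal) of the `i`-th vertex of the path `t`. -/
def pathHeight (t : List Bool) (i : ℕ) : ℤ :=
  ((t.take i).count true : ℤ) - ((t.take i).count false : ℤ)

/-- `s` lies weakly below `t` (for paths of the same semilength). -/
def WeaklyBelow (s t : List Bool) : Prop := ∀ i, pathHeight s i ≤ pathHeight t i

/-- The shape of a matching of `[2n]`: an east step for each opener, a south step for
each closer. -/
def shapeOf (n : ℕ) (M : Finset (ℕ × ℕ)) : List Bool :=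
  (List.range (2 * n)).map fun x => decide ((x + 1) ∈ M.image Prod.fst)

/-- Number of returns of a path: south steps ending on the diagonal. -/
def returnsOf (t : List Bool) : ℕ :=
  ((Finset.range t.length).filter fun i =>
    t[i]? = some false ∧ (t.take (i+1)).count true = (t.take (i+1)).count false).card

/-- Height sequence of a path, as natural numbers. -/
def hseq (t : List Bool) (i : ℕ) : ℕ := (t.take i).count true - (t.take i).count false

/-- `η(F)`: the number of indices `0 ≤ i ≤ 2n` with `h_i = 2`. -/
def etaOf (n : ℕ) (t : List Bool) : ℕ :=
  ((Finset.range (2 * n + 1)).filter fun i => hseq t i = 2).card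

/-! ### Full rook placements on Ferrers boards -/

/-- The square in column `c`, row `r` (both 1-indexed from the bottom left) belongs to the
Ferrers board with border path `t ∈ F_n`. -/
def InBoard (n : ℕ) (t : List Bool) (c r : ℕ) : Prop :=
  1 ≤ c ∧ 1 ≤ r ∧ ∃ i, c ≤ (t.take i).count true ∧ (t.take i).count false + r ≤ n

/-- `R` is a full rook placement on the Ferrers board with border path `t ∈ F_n`:
one rook in each of the `n` rows and `n` columns. -/
def IsFullRookPlacement (n : ℕ) (t : List Bool) (R : Finset (ℕ × ℕ)) : Prop :=
  (∀ p ∈ R, InBoard n t p.1 p.2) ∧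
  (∀ c, 1 ≤ c → c ≤ n → ∃! p, p ∈ R ∧ p.1 = c) ∧
  (∀ r, 1 ≤ r → r ≤ n → ∃! p, p ∈ R ∧ p.2 = r)

/-- The rooks of `R` lying in the rectangle `Γ(V_i)` determined by the `i`-th border vertex. -/
def rectRooks (n : ℕ) (t : List Bool) (R : Finset (ℕ × ℕ)) (i : ℕ) : Finset (ℕ × ℕ) :=
  R.filter fun p => p.1 ≤ (t.take i).count true ∧ p.2 + (t.take i).count false ≤ n

/-- Length of the longest increasing sequence (in both coordinates) in a finite point set. -/
def lisLen (S : Finset (ℕ × ℕ)) : ℕ :=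
  (S.powerset.filter fun T => ∀ p ∈ T, ∀ q ∈ T, p.1 < q.1 → p.2 < q.2).sup Finset.card

/-- The full rook placement `R` on the board with border `t ∈ F_n` contains the pattern `τ`:
some rectangle `Γ(V_i)` contains an occurrence of `τ`. -/
def PlacementContains {k : ℕ} (τ : Equiv.Perm (Fin k)) (n : ℕ) (t : List Bool)
    (R : Finset (ℕ × ℕ)) : Prop :=
  ∃ i ≤ 2 * n, ∃ f : Fin k → ℕ × ℕ,
    (∀ a, f a ∈ R ∧ (f a).1 ≤ (t.take i).count true ∧ (f a).2 + (t.take i).count false ≤ n) ∧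
    (∀ a b : Fin k, a < b → (f a).1 < (f b).1) ∧
    (∀ a b : Fin k, τ a < τ b → (f a).2 < (f b).2)

def PlacementAvoids {k : ℕ} (τ : Equiv.Perm (Fin k)) (n : ℕ) (t : List Bool)
    (R : Finset (ℕ × ℕ)) : Prop :=
  ¬ PlacementContains τ n t R

/-- `R` is board-minimal on the board with border `t`: every peak corner square holds a rook. -/
def BoardMinimal (n : ℕ) (t : List Bool) (R : Finset (ℕ × ℕ)) : Prop :=
  ∀ i, t[i]? = some true → t[i+1]? = some false →
    ((t.take (i+1)).count true, n - (t.take (i+1)).count false) ∈ R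

/-- Board-minimal full rook placements on boards of `F_n` avoiding the pattern `σ`,
recorded as pairs (border path, rook set). -/
def MinPlacements (n : ℕ) {k : ℕ} (σ : Equiv.Perm (Fin k)) :
    Set (List Bool × Finset (ℕ × ℕ)) :=
  {tR | IsDyckPath n tR.1 ∧ IsFullRookPlacement n tR.1 tR.2 ∧ BoardMinimal n tR.1 tR.2 ∧
        PlacementAvoids σ n tR.1 tR.2}

/-! ### Pattern avoidance in permutations -/

def PermContains {n k : ℕ} (τ : Equiv.Perm (Fin k)) (π : Equiv.Perm (Fin n)) : Prop :=
  ∃ f : Fin k → Fin n, StrictMono f ∧ ∀ a b : Fin k, τ a < τ b → π (f a) < π (f b)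

def PermAvoids {n k : ℕ} (τ : Equiv.Perm (Fin k)) (π : Equiv.Perm (Fin n)) : Prop :=
  ¬ PermContains τ π

/-- The full rook placement associated to a permutation of `[n]`. -/
def permPlacement {n : ℕ} (π : Equiv.Perm (Fin n)) : Finset (ℕ × ℕ) :=
  Finset.univ.image fun i : Fin n => ((i : ℕ) + 1, (π i : ℕ) + 1)

/-! ### Matchings with fixed points -/

/-- A (not necessarily perfect) matching on `{1, …, m}`: pairwise disjoint pairs. -/
def IsPartialMatching (m : ℕ) (M : Finset (ℕ × ℕ)) : Prop :=
  (∀ p ∈ M, p.1 < p.2 ∧ 1 ≤ p.1 ∧ p.2 ≤ m) ∧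
  ∀ p ∈ M, ∀ q ∈ M, p ≠ q → p.1 ≠ q.1 ∧ p.1 ≠ q.2 ∧ p.2 ≠ q.1 ∧ p.2 ≠ q.2

/-- The fixed points (unmatched vertices) of a matching on `{1, …, m}`. -/
def fixedPts (m : ℕ) (M : Finset (ℕ × ℕ)) : Finset ℕ :=
  (Finset.Icc 1 m).filter fun x => ∀ p ∈ M, p.1 ≠ x ∧ p.2 ≠ x

/-- The matched vertices of a matching on `{1, …, m}`. -/
def matchedSet (m : ℕ) (M : Finset (ℕ × ℕ)) : Finset ℕ :=
  (Finset.Icc 1 m).filter fun x => ∃ p ∈ M, p.1 = x ∨ p.2 = x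

/-- The rank (1-based) of `x` inside the finset `S`. -/
def rankIn (S : Finset ℕ) (x : ℕ) : ℕ := (S.filter (· ≤ x)).card

/-- The matching obtained by removing the fixed points and relabeling increasingly. -/
def relabeled (m : ℕ) (M : Finset (ℕ × ℕ)) : Finset (ℕ × ℕ) :=
  M.image fun p => (rankIn (matchedSet m M) p.1, rankIn (matchedSet m M) p.2)

/-! ### Set partitions -/

/-- `(i,j)` is an arc of the set partition `P` of `{1, …, n}`: `i < j` lie in a common block
with no element of that block strictly between them. -/
def PartArc {n : ℕ} (P : Finpartition (Finset.Icc 1 n)) (i j : ℕ) : Prop :=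
  i < j ∧ ∃ B ∈ P.parts, i ∈ B ∧ j ∈ B ∧ ∀ x ∈ B, ¬(i < x ∧ x < j)

/-- The set partition `P` contains the pattern `τ ∈ S_k`. -/
def PartContains {k n : ℕ} (τ : Equiv.Perm (Fin k)) (P : Finpartition (Finset.Icc 1 n)) : Prop :=
  ∃ f : Fin (2 * k) → ℕ, StrictMono f ∧
    ∀ a : Fin k,
      PartArc P (f ⟨a.1, by have := a.isLt; omega⟩)
        (f ⟨2 * k - 1 - (τ a).1, by have := (τ a).isLt; omega⟩)

def PartAvoids {k n : ℕ} (τ : Equiv.Perm (Fin k)) (P : Finpartition (Finset.Icc 1 n)) : Prop :=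
  ¬ PartContains τ P

/-! ### Counting functions -/

/-- `|M_n(τ)|`: the number of `τ`-avoiding perfect matchings of `[2n]`. -/
noncomputable def mcount {k : ℕ} (τ : Equiv.Perm (Fin k)) (n : ℕ) : ℕ :=
  {M : Finset (ℕ × ℕ) | IsPerfectMatching n M ∧ MatchAvoids τ M}.ncard

/-- `|M_n(σ,τ)|`: the number of perfect matchings of `[2n]` avoiding both `σ` and `τ`. -/
noncomputable def mcount2 {k : ℕ} (σ τ : Equiv.Perm (Fin k)) (n : ℕ) : ℕ :=
  {M : Finset (ℕ × ℕ) | IsPerfectMatching n M ∧ MatchAvoids σ M ∧ MatchAvoids τ M}.ncard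

/-- `|P_n(τ)|`: the number of `τ`-avoiding set partitions of `[n]`. -/
noncomputable def pcount {k : ℕ} (τ : Equiv.Perm (Fin k)) (n : ℕ) : ℕ :=
  Nat.card {P : Finpartition (Finset.Icc 1 n) // PartAvoids τ P}

/-- `|P_n(σ,τ)|`: the number of set partitions of `[n]` avoiding both `σ` and `τ`. -/
noncomputable def pcount2 {k : ℕ} (σ τ : Equiv.Perm (Fin k)) (n : ℕ) : ℕ :=
  Nat.card {P : Finpartition (Finset.Icc 1 n) // PartAvoids σ P ∧ PartAvoids τ P}

/-- `|S_n(τ)|`: the number of `τ`-avoiding permutations of `[n]`. -/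
noncomputable def scount {k : ℕ} (τ : Equiv.Perm (Fin k)) (n : ℕ) : ℕ :=
  Nat.card {π : Equiv.Perm (Fin n) // PermAvoids τ π}

/-!
Reading a matching or a set partition from right to left turns every arc `(i, j)` into
`(N + 1 - j, N + 1 - i)`, which replaces the occurrences of a pattern `τ` by occurrences of `τ⁻¹`.
As `123⁻¹ = 123` and `231⁻¹ = 312`, the two pairs of patterns are avoided equally often.

Reversal does not preserve the shape. The matchings of a fixed shape correspond to the full rook
placements on its Ferrers board, where a pattern occurs when some rectangle inside the board
contains it as a permutation pattern. On the board of the statement these placements are counted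
by enumeration.
-/

section ArcPatterns

variable {α β : Type*} {k : ℕ} {τ : Equiv.Perm (Fin k)}

/-- The arc relation `R` contains the pattern `τ`: there are `k` arcs `(x a, y a)`, all of whose
openers precede all of whose closers, listed by increasing opener, with the closers appearing from
right to left in the order prescribed by `τ`. It is the common form of pattern containment for
matchings and set partitions, with the `2k` positions split into openers and closers. -/
def ArcContains [Preorder α] (τ : Equiv.Perm (Fin k)) (R : α → α → Prop) : Prop :=
  ∃ x y : Fin k → α, StrictMono x ∧ (∀ a b, τ a < τ b → y b < y a) ∧ (∀ a b, x a < y b) ∧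
    ∀ a, R (x a) (y a)

theorem exists_strictMono_arcs_iff_arcContains [Preorder α] {R : α → α → Prop} :
    (∃ f : Fin (2 * k) → α, StrictMono f ∧ ∀ a : Fin k,
      R (f ⟨a.1, by have := a.isLt; omega⟩)
        (f ⟨2 * k - 1 - (τ a).1, by have := (τ a).isLt; omega⟩)) ↔ ArcContains τ R := by
  constructor
  · rintro ⟨f, hf, hR⟩
    refine ⟨fun a => f ⟨a, by omega⟩, fun a => f ⟨2 * k - 1 - τ a, by omega⟩,
      fun a b hab => hf hab, fun a b hab => hf ?_, fun a b => hf ?_, hR⟩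
    all_goals
      rw [Fin.lt_def] at *
      dsimp only
      omega
  · rintro ⟨x, y, hx, hy, hxy, hR⟩
    refine ⟨fun i => if h : i.1 < k then x ⟨i, h⟩ else y (τ.symm ⟨2 * k - 1 - i, by omega⟩),
      fun i j hij => ?_, fun a => ?_⟩
    · rw [Fin.lt_def] at hij
      dsimp only
      split_ifs with hi hj hj
      · exact hx hij
      · exact hxy _ _
      · omega
      · refine hy _ _ ?_
        simp only [Equiv.apply_symm_apply, Fin.lt_def]
        omega
    · have closer_index : 2 * k - 1 - (2 * k - 1 - (τ a).1) = τ a := by omega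
      have not_opener : ¬ 2 * k - 1 - (τ a).1 < k := by omega
      simpa only [a.isLt, dif_pos, not_opener, dif_neg, not_false_eq_true, closer_index,
        Fin.eta, Equiv.symm_apply_apply] using hR a

theorem matchContains_iff_arcContains {M : Finset (ℕ × ℕ)} :
    MatchContains τ M ↔ ArcContains τ (fun i j => (i, j) ∈ M) :=
  exists_strictMono_arcs_iff_arcContains (R := fun i j => (i, j) ∈ M)

theorem partContains_iff_arcContains {n : ℕ} {P : Finpartition (Finset.Icc 1 n)} :
    PartContains τ P ↔ ArcContains τ (PartArc P) :=
  exists_strictMono_arcs_iff_arcContains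

theorem ArcContains.inv_of_strictAntiOn [Preorder α] [Preorder β] {r : α → β} {s : Set α}
    {R : α → α → Prop} {R' : β → β → Prop} (hr : StrictAntiOn r s)
    (hR : ∀ i j, R i j → i ∈ s ∧ j ∈ s ∧ R' (r j) (r i)) (h : ArcContains τ R) :
    ArcContains τ⁻¹ R' := by
  obtain ⟨x, y, hx, hy, hxy, hxyR⟩ := h
  have hxs a : x a ∈ s := (hR _ _ (hxyR a)).1
  have hys a : y a ∈ s := (hR _ _ (hxyR a)).2.1
  refine ⟨r ∘ y ∘ ⇑τ⁻¹, r ∘ x ∘ ⇑τ⁻¹, fun a b hab => hr (hys _) (hys _) (hy _ _ ?_),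
    fun a b hab => hr (hxs _) (hxs _) (hx hab), fun a b => hr (hxs _) (hys _) (hxy _ _),
    fun a => (hR _ _ (hxyR _)).2.2⟩
  simpa using hab

end ArcPatterns

section Reflection

variable {n x y : ℕ}

/-- The reflection `x ↦ n + 1 - x` of `{1, …, n}`, extended by the identity so that it becomes a
permutation of `ℕ`. -/
def reflect (n : ℕ) : Equiv.Perm ℕ :=
  Function.Involutive.toPerm (fun x => if x ∈ Finset.Icc 1 n then n + 1 - x else x) fun x => by
    simp only [Finset.mem_Icc]
    split_ifs <;> omega

theorem reflect_of_mem (hx : x ∈ Finset.Icc 1 n) : reflect n x = n + 1 - x :=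
  if_pos hx

@[simp]
theorem reflect_symm : (reflect n).symm = reflect n :=
  rfl

@[simp]
theorem reflect_reflect : reflect n (reflect n x) = x :=
  (reflect n).symm_apply_apply x

@[simp]
theorem reflect_mem_Icc : reflect n x ∈ Finset.Icc 1 n ↔ x ∈ Finset.Icc 1 n := by
  have maps_Icc {x : ℕ} (hx : x ∈ Finset.Icc 1 n) : reflect n x ∈ Finset.Icc 1 n := by
    rw [reflect_of_mem hx]
    simp only [Finset.mem_Icc] at hx ⊢
    omega
  exact ⟨fun hx => reflect_reflect (n := n) (x := x) ▸ maps_Icc hx, maps_Icc⟩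

theorem strictAntiOn_reflect : StrictAntiOn (reflect n) (Finset.Icc 1 n) := by
  intro x hx y hy hxy
  rw [reflect_of_mem hx, reflect_of_mem hy]
  simp only [Finset.coe_Icc, Set.mem_Icc] at hx hy
  omega

theorem reflect_lt_reflect (hx : x ∈ Finset.Icc 1 n) (hy : y ∈ Finset.Icc 1 n) :
    reflect n x < reflect n y ↔ y < x :=
  strictAntiOn_reflect.lt_iff_gt hx hy

end Reflection

section ReverseMatching

variable {m n : ℕ} {M : Finset (ℕ × ℕ)}

/-- The effect on arcs of reading `{1, …, m}` from right to left. -/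
def reverseArc (m : ℕ) : Equiv.Perm (ℕ × ℕ) :=
  (Equiv.prodComm ℕ ℕ).trans ((reflect m).prodCongr (reflect m))

/-- Reversal of a matching on `{1, …, m}`, as a permutation of all finite sets of arcs. -/
def reverseMatching (m : ℕ) : Equiv.Perm (Finset (ℕ × ℕ)) :=
  (reverseArc m).finsetCongr

@[simp]
theorem mk_mem_reverseMatching {i j : ℕ} :
    (i, j) ∈ reverseMatching m M ↔ (reflect m j, reflect m i) ∈ M :=
  Finset.mem_map_equiv

theorem reverseMatching_reverseMatching : reverseMatching m (reverseMatching m M) = M := by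
  ext ⟨i, j⟩
  simp only [mk_mem_reverseMatching, reflect_reflect]

theorem IsPerfectMatching.mem_Icc (hM : IsPerfectMatching n M) {i j : ℕ} (h : (i, j) ∈ M) :
    i ∈ Finset.Icc 1 (2 * n) ∧ j ∈ Finset.Icc 1 (2 * n) := by
  obtain ⟨hij, hi, hj⟩ := hM.1 _ h
  simp only [Finset.mem_Icc] at *
  omega

theorem IsPerfectMatching.reverse (hM : IsPerfectMatching n M) :
    IsPerfectMatching n (reverseMatching (2 * n) M) := by
  constructor
  · rintro ⟨i, j⟩ h
    rw [mk_mem_reverseMatching] at h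
    obtain ⟨hj, hi⟩ := hM.mem_Icc h
    rw [reflect_mem_Icc] at hi hj
    exact ⟨(reflect_lt_reflect hj hi).1 (hM.1 _ h).1, (Finset.mem_Icc.1 hi).1,
      (Finset.mem_Icc.1 hj).2⟩
  · intro x hx hx'
    have hrx := Finset.mem_Icc.1 (reflect_mem_Icc.2 (Finset.mem_Icc.2 ⟨hx, hx'⟩))
    refine ((reverseArc (2 * n)).existsUnique_congr fun p => ?_).1 (hM.2 _ hrx.1 hrx.2)
    rw [reverseMatching, Equiv.finsetCongr_apply, Finset.mem_map_equiv, Equiv.symm_apply_apply]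
    simp only [reverseArc, Equiv.trans_apply, Equiv.prodComm_apply, Equiv.prodCongr_apply,
      Prod.map_fst, Prod.map_snd, Prod.fst_swap, Prod.snd_swap, ← Equiv.eq_symm_apply,
      reflect_symm, or_comm]

theorem isPerfectMatching_reverse_iff :
    IsPerfectMatching n (reverseMatching (2 * n) M) ↔ IsPerfectMatching n M :=
  ⟨fun h => reverseMatching_reverseMatching (M := M) ▸ h.reverse, IsPerfectMatching.reverse⟩

variable {k : ℕ} {τ : Equiv.Perm (Fin k)}

theorem IsPerfectMatching.matchContains_inv_reverse (hM : IsPerfectMatching n M)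
    (h : MatchContains τ M) : MatchContains τ⁻¹ (reverseMatching (2 * n) M) := by
  rw [matchContains_iff_arcContains] at h ⊢
  refine h.inv_of_strictAntiOn strictAntiOn_reflect fun i j hij =>
    ⟨(hM.mem_Icc hij).1, (hM.mem_Icc hij).2, ?_⟩
  simpa only [mk_mem_reverseMatching, reflect_reflect] using hij

theorem IsPerfectMatching.matchAvoids_inv_reverse_iff (hM : IsPerfectMatching n M) :
    MatchAvoids τ⁻¹ (reverseMatching (2 * n) M) ↔ MatchAvoids τ M := by
  refine not_congr ⟨fun h => ?_, hM.matchContains_inv_reverse⟩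
  simpa only [inv_inv, reverseMatching_reverseMatching]
    using hM.reverse.matchContains_inv_reverse h

theorem mcount2_inv (σ τ : Equiv.Perm (Fin k)) (n : ℕ) :
    mcount2 σ⁻¹ τ⁻¹ n = mcount2 σ τ n := by
  refine (Nat.card_congr ((reverseMatching (2 * n)).subtypeEquiv fun M => ?_)).symm
  exact (and_congr_right fun hM => and_congr hM.matchAvoids_inv_reverse_iff.symm
    hM.matchAvoids_inv_reverse_iff.symm).trans
      (and_congr_left' isPerfectMatching_reverse_iff.symm)

end ReverseMatching

section ReversePartition

variable {n : ℕ} {P : Finpartition (Finset.Icc 1 n)}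

/-- The order isomorphism of `Finset ℕ` reflecting the elements of a finset in `{1, …, n}`. -/
def reflectFinset (n : ℕ) : Finset ℕ ≃o Finset ℕ where
  toEquiv := (reflect n).finsetCongr
  map_rel_iff' := Finset.map_subset_map

@[simp]
theorem mem_reflectFinset {x : ℕ} {B : Finset ℕ} : x ∈ reflectFinset n B ↔ reflect n x ∈ B :=
  Finset.mem_map_equiv

@[simp]
theorem reflectFinset_reflectFinset {B : Finset ℕ} :
    reflectFinset n (reflectFinset n B) = B := by
  ext x
  simp only [mem_reflectFinset, reflect_reflect]

/-- Reversal of a set partition of `{1, …, n}`: its blocks are the reflected blocks of `P`. -/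
def reversePartition (P : Finpartition (Finset.Icc 1 n)) : Finpartition (Finset.Icc 1 n) :=
  (P.map (reflectFinset n)).copy <| by
    ext x
    rw [mem_reflectFinset, reflect_mem_Icc]

theorem mem_parts_reversePartition {B : Finset ℕ} :
    B ∈ (reversePartition P).parts ↔ reflectFinset n B ∈ P.parts :=
  Finset.mem_map_equiv

theorem reversePartition_involutive :
    Function.Involutive (reversePartition : Finpartition (Finset.Icc 1 n) → _) := by
  intro P
  ext B
  simp only [mem_parts_reversePartition, reflectFinset_reflectFinset]

theorem PartArc.mem_Icc {i j : ℕ} (h : PartArc P i j) :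
    i ∈ Finset.Icc 1 n ∧ j ∈ Finset.Icc 1 n := by
  obtain ⟨-, B, hB, hi, hj, -⟩ := h
  exact ⟨P.le hB hi, P.le hB hj⟩

theorem PartArc.reverse {i j : ℕ} (h : PartArc P i j) :
    PartArc (reversePartition P) (reflect n j) (reflect n i) := by
  obtain ⟨hi, hj⟩ := h.mem_Icc
  obtain ⟨hij, B, hB, hiB, hjB, hgap⟩ := h
  refine ⟨(reflect_lt_reflect hj hi).2 hij, reflectFinset n B, ?_, ?_, ?_, ?_⟩
  · rwa [mem_parts_reversePartition, reflectFinset_reflectFinset]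
  · rwa [mem_reflectFinset, reflect_reflect]
  · rwa [mem_reflectFinset, reflect_reflect]
  · rintro z hz ⟨hjz, hzi⟩
    rw [mem_reflectFinset] at hz
    have hzn := P.le hB hz
    rw [← reflect_reflect (x := z), reflect_lt_reflect] at hjz hzi
    exacts [hgap _ hz ⟨hzi, hjz⟩, hzn, hi, hj, hzn]

variable {k : ℕ} {τ : Equiv.Perm (Fin k)}

theorem partContains_inv_reverse (h : PartContains τ P) :
    PartContains τ⁻¹ (reversePartition P) := by
  rw [partContains_iff_arcContains] at h ⊢
  exact h.inv_of_strictAntiOn strictAntiOn_reflect fun i j hij =>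
    ⟨hij.mem_Icc.1, hij.mem_Icc.2, hij.reverse⟩

theorem partAvoids_inv_reverse_iff :
    PartAvoids τ⁻¹ (reversePartition P) ↔ PartAvoids τ P := by
  refine not_congr ⟨fun h => ?_, partContains_inv_reverse⟩
  simpa only [inv_inv, reversePartition_involutive P] using partContains_inv_reverse h

theorem pcount2_inv (σ τ : Equiv.Perm (Fin k)) (n : ℕ) :
    pcount2 σ⁻¹ τ⁻¹ n = pcount2 σ τ n :=
  (Nat.card_congr (reversePartition_involutive.toPerm.subtypeEquiv fun _ =>
    and_congr partAvoids_inv_reverse_iff.symm partAvoids_inv_reverse_iff.symm)).symm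

end ReversePartition

section RookPlacements

variable {n : ℕ} {o c : Fin n → ℕ} {π : Equiv.Perm (Fin n)} {M : Finset (ℕ × ℕ)}

/-- The border path whose `x`-th step, for `1 ≤ x ≤ 2n`, is an east step exactly when `x ∈ O`. -/
def borderPath (n : ℕ) (O : Finset ℕ) : List Bool :=
  (List.range (2 * n)).map fun x => decide (x + 1 ∈ O)

theorem borderPath_injOn :
    Set.InjOn (borderPath n) {O | O ⊆ Finset.Icc 1 (2 * n)} := by
  intro O hO O' hO' h
  simp only [borderPath, List.map_inj_left, List.mem_range, decide_eq_decide] at h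
  ext x
  by_cases hx : x ∈ Finset.Icc 1 (2 * n)
  · rw [Finset.mem_Icc] at hx
    simpa only [Nat.sub_add_cancel hx.1] using h (x - 1) (by omega)
  · exact iff_of_false (fun h => hx (hO h)) (fun h => hx (hO' h))

theorem shapeOf_eq_borderPath : shapeOf n M = borderPath n (M.image Prod.fst) :=
  rfl

/-- `o` labels the columns of a Ferrers board in `F_n`, from left to right, by the positions of the
east steps of its border, and `c` labels the rows, from bottom to top, by the positions of the
south steps. The square in column `i` and row `j` lies on the board exactly when `o i < c j`. -/
structure IsBoardLabelling (o c : Fin n → ℕ) : Prop where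
  strictMono_column : StrictMono o
  strictAnti_row : StrictAnti c
  disjoint : Disjoint (Finset.univ.image o) (Finset.univ.image c)
  union_eq : Finset.univ.image o ∪ Finset.univ.image c = Finset.Icc 1 (2 * n)

/-- The matching corresponding to the full rook placement with a rook in column `i` and row `π i`
for every `i`. -/
def rookMatching (o c : Fin n → ℕ) (π : Equiv.Perm (Fin n)) : Finset (ℕ × ℕ) :=
  Finset.univ.image fun i => (o i, c (π i))

theorem mk_mem_rookMatching {x y : ℕ} :
    (x, y) ∈ rookMatching o c π ↔ ∃ i, o i = x ∧ c (π i) = y := by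
  simp only [rookMatching, Finset.mem_image, Finset.mem_univ, true_and, Prod.mk.injEq]

theorem image_fst_rookMatching : (rookMatching o c π).image Prod.fst = Finset.univ.image o := by
  simp only [rookMatching, Finset.image_image, Function.comp_def]

namespace IsBoardLabelling

theorem column_ne_row (h : IsBoardLabelling o c) (i j : Fin n) : o i ≠ c j :=
  Finset.disjoint_iff_ne.1 h.disjoint _ (Finset.mem_image_of_mem o (Finset.mem_univ i)) _
    (Finset.mem_image_of_mem c (Finset.mem_univ j))

theorem mem_Icc_iff (h : IsBoardLabelling o c) {x : ℕ} :
    x ∈ Finset.Icc 1 (2 * n) ↔ (∃ i, o i = x) ∨ ∃ j, c j = x := by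
  simp only [← h.union_eq, Finset.mem_union, Finset.mem_image, Finset.mem_univ, true_and]

theorem rookMatching_injective (h : IsBoardLabelling o c) :
    Function.Injective (rookMatching o c) := by
  intro π ρ hπρ
  ext i : 1
  obtain ⟨j, hji, hρ⟩ := mk_mem_rookMatching.1 (hπρ ▸ mk_mem_rookMatching.2 ⟨i, rfl, rfl⟩)
  obtain rfl := h.strictMono_column.injective hji
  exact (h.strictAnti_row.injective hρ).symm

theorem isPerfectMatching_rookMatching (h : IsBoardLabelling o c) (hπ : ∀ i, o i < c (π i)) :
    IsPerfectMatching n (rookMatching o c π) := by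
  constructor
  · rintro ⟨x, y⟩ hxy
    obtain ⟨i, rfl, rfl⟩ := mk_mem_rookMatching.1 hxy
    exact ⟨hπ i, (Finset.mem_Icc.1 (h.mem_Icc_iff.2 (.inl ⟨i, rfl⟩))).1,
      (Finset.mem_Icc.1 (h.mem_Icc_iff.2 (.inr ⟨π i, rfl⟩))).2⟩
  · intro x hx hx'
    have exists_column : ∃ i, o i = x ∨ c (π i) = x := by
      obtain ⟨i, hi⟩ | ⟨j, hj⟩ := h.mem_Icc_iff.1 (Finset.mem_Icc.2 ⟨hx, hx'⟩)
      · exact ⟨i, .inl hi⟩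
      · exact ⟨π.symm j, .inr (by rwa [π.apply_symm_apply])⟩
    obtain ⟨i, hi⟩ := exists_column
    refine ⟨(o i, c (π i)), ⟨mk_mem_rookMatching.2 ⟨i, rfl, rfl⟩, hi⟩, ?_⟩
    rintro ⟨_, _⟩ ⟨hp, hpx⟩
    obtain ⟨j, rfl, rfl⟩ := mk_mem_rookMatching.1 hp
    suffices j = i by rw [this]
    obtain rfl | rfl := hi <;> obtain hj | hj := hpx
    · exact h.strictMono_column.injective hj
    · exact absurd hj.symm (h.column_ne_row _ _)
    · exact absurd hj (h.column_ne_row _ _)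
    · exact π.injective (h.strictAnti_row.injective hj)

theorem exists_rookMatching_eq (h : IsBoardLabelling o c) (hM : IsPerfectMatching n M)
    (hshape : M.image Prod.fst = Finset.univ.image o) :
    ∃ π : Equiv.Perm (Fin n), rookMatching o c π = M := by
  have opener_mem (i : Fin n) : o i ∈ M.image Prod.fst :=
    hshape ▸ Finset.mem_image_of_mem o (Finset.mem_univ i)
  have exists_closer (i : Fin n) : ∃ j, (o i, c j) ∈ M := by
    obtain ⟨⟨x, y⟩, hxy, rfl : x = o i⟩ := Finset.mem_image.1 (opener_mem i)
    have hy := (hM.mem_Icc hxy).2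
    obtain ⟨j, rfl⟩ | ⟨j, rfl⟩ := h.mem_Icc_iff.1 hy
    · obtain ⟨⟨x, y⟩, hj, rfl : x = o j⟩ := Finset.mem_image.1 (opener_mem j)
      obtain ⟨hy₁, hy₂⟩ := Finset.mem_Icc.1 hy
      have := (hM.2 _ hy₁ hy₂).unique ⟨hxy, .inr rfl⟩ ⟨hj, .inl rfl⟩
      exact absurd (Prod.mk.inj this).1 (hM.1 _ hxy).1.ne
    · exact ⟨j, hxy⟩
  choose g hg using exists_closer
  have g_injective : Function.Injective g := by
    intro i j hij
    obtain ⟨hi₁, hi₂⟩ := Finset.mem_Icc.1 (hM.mem_Icc (hg i)).2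
    have := (hM.2 _ hi₁ hi₂).unique ⟨hg i, .inr rfl⟩ ⟨hg j, .inr (hij ▸ rfl)⟩
    exact h.strictMono_column.injective (Prod.mk.inj this).1
  refine ⟨Equiv.ofBijective g g_injective.bijective_of_finite, ?_⟩
  ext ⟨x, y⟩
  rw [mk_mem_rookMatching]
  refine ⟨by rintro ⟨i, rfl, rfl⟩; exact hg i, fun hxy => ?_⟩
  have hx : x ∈ Finset.univ.image o := hshape ▸ Finset.mem_image_of_mem Prod.fst hxy
  obtain ⟨i, -, rfl⟩ := Finset.mem_image.1 hx
  obtain ⟨hi₁, hi₂⟩ := Finset.mem_Icc.1 (hM.mem_Icc hxy).1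
  have := (hM.2 _ hi₁ hi₂).unique ⟨hg i, .inl rfl⟩ ⟨hxy, .inl rfl⟩
  exact ⟨i, rfl, (Prod.mk.inj this).2⟩

theorem isPerfectMatching_and_shapeOf_eq_iff (h : IsBoardLabelling o c) :
    IsPerfectMatching n M ∧ shapeOf n M = borderPath n (Finset.univ.image o) ↔
      ∃ π : Equiv.Perm (Fin n), (∀ i, o i < c (π i)) ∧ rookMatching o c π = M := by
  constructor
  · rintro ⟨hM, hshape⟩
    have fst_subset : M.image Prod.fst ⊆ Finset.Icc 1 (2 * n) :=
      Finset.image_subset_iff.2 fun _ hp => (hM.mem_Icc hp).1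
    have columns_subset : Finset.univ.image o ⊆ Finset.Icc 1 (2 * n) :=
      h.union_eq ▸ Finset.subset_union_left
    obtain ⟨π, rfl⟩ :=
      h.exists_rookMatching_eq hM (borderPath_injOn fst_subset columns_subset hshape)
    exact ⟨π, fun i => (hM.1 _ (mk_mem_rookMatching.2 ⟨i, rfl, rfl⟩)).1, rfl⟩
  · rintro ⟨π, hπ, rfl⟩
    exact ⟨h.isPerfectMatching_rookMatching hπ, by
      rw [shapeOf_eq_borderPath, image_fst_rookMatching]⟩

end IsBoardLabelling

variable {k : ℕ} {τ : Equiv.Perm (Fin k)}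

/-- The full rook placement `π` on the board labelled by `o` and `c` contains `τ` inside a
rectangle that lies on the board: `f` picks the columns of the occurrence, and the last condition
puts all squares where its columns and rows meet on the board. -/
def RookContains (o c : Fin n → ℕ) (τ : Equiv.Perm (Fin k)) (π : Equiv.Perm (Fin n)) : Prop :=
  ∃ f : Fin k → Fin n, (∀ a b, a < b → f a < f b) ∧
    (∀ a b, τ a < τ b → π (f a) < π (f b)) ∧ ∀ a b, o (f a) < c (π (f b))

instance : Decidable (RookContains o c τ π) :=
  inferInstanceAs (Decidable (∃ _, _))

/-- The full rook placements on the board labelled by `o` and `c` that avoid `σ` and `τ`. -/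
def rookPlacementsAvoiding (o c : Fin n → ℕ) (σ τ : Equiv.Perm (Fin k)) :
    Finset (Equiv.Perm (Fin n)) :=
  {π | (∀ i, o i < c (π i)) ∧ ¬ RookContains o c σ π ∧ ¬ RookContains o c τ π}

theorem IsBoardLabelling.matchContains_rookMatching_iff (h : IsBoardLabelling o c) :
    MatchContains τ (rookMatching o c π) ↔ RookContains o c τ π := by
  rw [matchContains_iff_arcContains]
  constructor
  · rintro ⟨x, y, hx, hy, hxy, hM⟩
    choose f hfx hfy using fun a => mk_mem_rookMatching.1 (hM a)
    obtain rfl : o ∘ f = x := funext hfx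
    obtain rfl : c ∘ π ∘ f = y := funext hfy
    exact ⟨f, fun a b hab => h.strictMono_column.lt_iff_lt.1 (hx hab),
      fun a b hab => h.strictAnti_row.lt_iff_gt.1 (hy a b hab), hxy⟩
  · rintro ⟨f, hf, hπf, hboard⟩
    exact ⟨o ∘ f, c ∘ π ∘ f, fun a b hab => h.strictMono_column (hf a b hab),
      fun a b hab => h.strictAnti_row (hπf a b hab), hboard,
      fun a => mk_mem_rookMatching.2 ⟨f a, rfl, rfl⟩⟩

theorem IsBoardLabelling.ncard_matchings_avoiding (h : IsBoardLabelling o c)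
    (σ τ : Equiv.Perm (Fin k)) :
    {M | IsPerfectMatching n M ∧ MatchAvoids σ M ∧ MatchAvoids τ M ∧
        shapeOf n M = borderPath n (Finset.univ.image o)}.ncard =
      (rookPlacementsAvoiding o c σ τ).card := by
  rw [← Finset.card_image_of_injective _ h.rookMatching_injective, ← Set.ncard_coe_finset]
  congr 1
  ext M
  simp only [rookPlacementsAvoiding, Finset.coe_image, Finset.coe_filter, Finset.mem_univ,
    true_and, Set.mem_image]
  constructor
  · rintro ⟨hM, hσ, hτ, hshape⟩
    obtain ⟨π, hπ, rfl⟩ := h.isPerfectMatching_and_shapeOf_eq_iff.1 ⟨hM, hshape⟩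
    exact ⟨π, ⟨hπ, mt h.matchContains_rookMatching_iff.2 hσ,
      mt h.matchContains_rookMatching_iff.2 hτ⟩, rfl⟩
  · rintro ⟨π, ⟨hπ, hσ, hτ⟩, rfl⟩
    obtain ⟨hM, hshape⟩ := h.isPerfectMatching_and_shapeOf_eq_iff.2 ⟨π, hπ, rfl⟩
    exact ⟨hM, mt h.matchContains_rookMatching_iff.1 hσ,
      mt h.matchContains_rookMatching_iff.1 hτ, hshape⟩

end RookPlacements

section CounterexampleBoard

/-- The positions of the east steps of the border of the board with three columns of height `5`
followed by two columns of height `4`, as column labels in the sense of `IsBoardLabelling`. -/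
def boardColumns : Fin 5 → ℕ := ![1, 2, 3, 5, 6]

/-- The positions of the south steps of the border of the same board, as row labels. -/
def boardRows : Fin 5 → ℕ := ![10, 9, 8, 7, 4]

theorem isBoardLabelling_boardColumns_boardRows : IsBoardLabelling boardColumns boardRows where
  strictMono_column := by decide
  strictAnti_row := by decide
  disjoint := by decide
  union_eq := by decide

theorem borderPath_boardColumns :
    borderPath 5 (Finset.univ.image boardColumns) =
      [true, true, true, false, true, true, false, false, false, false] := by
  decide

theorem card_rookPlacementsAvoiding_123_231 :
    (rookPlacementsAvoiding boardColumns boardRows p123 p231).card = 14 := by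
  decide +kernel

theorem card_rookPlacementsAvoiding_123_312 :
    (rookPlacementsAvoiding boardColumns boardRows p123 p312).card = 15 := by
  decide +kernel

end CounterexampleBoard

theorem p123_inv : p123⁻¹ = p123 :=
  rfl

theorem p231_inv : p231⁻¹ = p312 :=
  rfl

/-- The pairs `{123,231}` and `{123,312}` are avoided by equally many
matchings of `[2n]` and by equally many set partitions of `[n]` for every `n`, yet they are
not shape-Wilf-equivalent: on the board `F ∈ F_5` with three columns of height 5 followed
by two columns of height 4 they are avoided by `14` and `15` matchings, respectively. -/
theorem pairs_123_231_and_123_312 :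
    (∀ n : ℕ, mcount2 p123 p231 n = mcount2 p123 p312 n) ∧
    (∀ n : ℕ, pcount2 p123 p231 n = pcount2 p123 p312 n) ∧
    {M : Finset (ℕ × ℕ) | IsPerfectMatching 5 M ∧ MatchAvoids p123 M ∧ MatchAvoids p231 M ∧
        shapeOf 5 M = [true, true, true, false, true, true, false, false, false, false]}.ncard
      = 14 ∧
    {M : Finset (ℕ × ℕ) | IsPerfectMatching 5 M ∧ MatchAvoids p123 M ∧ MatchAvoids p312 M ∧
        shapeOf 5 M = [true, true, true, false, true, true, false, false, false, false]}.ncard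
      = 15 := by
  refine ⟨fun n => ?_, fun n => ?_, ?_, ?_⟩
  · rw [← mcount2_inv, p123_inv, p231_inv]
  · rw [← pcount2_inv, p123_inv, p231_inv]
  · rw [← borderPath_boardColumns,
      isBoardLabelling_boardColumns_boardRows.ncard_matchings_avoiding,
      card_rookPlacementsAvoiding_123_231]
  · rw [← borderPath_boardColumns,
      isBoardLabelling_boardColumns_boardRows.ncard_matchings_avoiding,
      card_rookPlacementsAvoiding_123_312]
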